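/- Let (W, S) be a Coxeter system of finite rank and A ⊆ W a subset. Among all parabolic subgroups w W_J w⁻¹ of W containing A, there exists one minimizing |J|, and this parabolic subgroup equals the intersection of all parabolic subgroups of W containing A. -/

import Mathlib

/-!
The number `n(w, t) ∈ ℤ/2` of occurrences of `t` in the right inversion sequence of a word for `w`
depends only on `w`: in the word `(s_i s_j)^m` of a Coxeter relation each reflection is met an even
number of times. It is nonzero exactly at the inversions of `w`, and
`n(w₁ w₂, t) = n(w₂, t) + n(w₁, w₂ t w₂⁻¹)`.

Let `d` have minimal length in `d W_K` and put `H = d⁻¹ W_J d`. If `v ∈ W_K ∩ H`, then conjugation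
by `d` maps the inversions of `v` to inversions of `d v d⁻¹ ∈ W_J`, since `d` itself has no
inversion in `W_K`; so all inversions of `v` lie in `H`. Reading the inversion sequence of a reduced
word for `v` from the right shows that all its letters lie in `H` too. Hence `W_K ∩ H` is generated
by the simple reflections indexed by `K` that lie in `H`.

Consequently the intersection of `x W_J x⁻¹` with any parabolic subgroup is `z W_{J'} z⁻¹` for some
`J' ⊆ J` and `z ∈ x W_J`. If both subgroups contain `A` and `|J|` is minimal and finite, then
`J' = J`, so the intersection is `z W_J z⁻¹ = x W_J x⁻¹`.
-/

open CoxeterSystem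
open scoped Pointwise

namespace CoxeterParabolic

lemma prod_map_alternatingWord_add_self {B G : Type*} [Monoid G] (f : B → G) (i j : B) (m : ℕ) :
    ((alternatingWord i j (m + m)).map f).prod = (f i * f j) ^ m := by
  induction m with
  | zero => simp [alternatingWord]
  | succ m ih =>
    rw [show m + 1 + (m + 1) = m + m + 1 + 1 by ring, alternatingWord_succ',
      alternatingWord_succ', pow_succ', ← ih]
    simp [mul_assoc, Nat.even_add_one]

variable {B W : Type*} [Group W] {M : CoxeterMatrix B} (cs : CoxeterSystem M W)

section Parity

lemma reverse_rightInvSeq_alternatingWord (i j : B) (m : ℕ) :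
    (cs.rightInvSeq (alternatingWord i j m)).reverse =
      (List.range m).map fun k ↦ cs.simple j * (cs.simple i * cs.simple j) ^ k := by
  induction m generalizing i j with
  | zero => simp [alternatingWord]
  | succ m ih =>
    have conj_term (k : ℕ) : MulAut.conj (cs.simple j)
        (cs.simple i * (cs.simple j * cs.simple i) ^ k) =
          cs.simple j * (cs.simple i * cs.simple j) ^ (k + 1) := by
      rw [MulAut.conj_apply, inv_simple, mul_assoc, mul_assoc, mul_pow_mul, pow_succ', mul_assoc]
    rw [alternatingWord_succ, rightInvSeq_concat, List.concat_eq_append, List.reverse_append,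
      List.reverse_singleton, List.singleton_append, ← List.map_reverse, ih, List.map_map,
      List.range_succ_eq_map, List.map_cons, pow_zero, mul_one, List.map_map]
    exact congrArg _ (List.map_congr_left fun k _ ↦ conj_term k)

variable [DecidableEq W]

lemma even_count_rightInvSeq_alternatingWord (i j : B) (t : W) :
    Even ((cs.rightInvSeq (alternatingWord i j (M i j + M i j))).count t) := by
  rw [← List.count_reverse, reverse_rightInvSeq_alternatingWord, List.range_add, List.map_append,
    List.map_map, List.count_append]
  simp [Function.comp_def, pow_add]

/-- The action of `s_i` on `W × ℤ/2` given by `(t, e) ↦ (s_i t s_i, e + [t = s_i])`; it keeps track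
of inversions modulo 2. The first factor is all of `W` rather than the set of reflections. -/
def simpleAction (i : B) : Function.End (W × ZMod 2) :=
  fun p ↦ (cs.simple i * p.1 * cs.simple i, p.2 + if p.1 = cs.simple i then 1 else 0)

lemma prod_simpleAction_smul (ω : List B) (t : W) (e : ZMod 2) :
    (ω.map (simpleAction cs)).prod • (t, e) =
      (cs.wordProd ω * t * (cs.wordProd ω)⁻¹, e + (cs.rightInvSeq ω).count t) := by
  induction ω with
  | nil => simp
  | cons i ω ih =>
    have conj_eq_iff : cs.wordProd ω * t * (cs.wordProd ω)⁻¹ = cs.simple i ↔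
        (cs.wordProd ω)⁻¹ * cs.simple i * cs.wordProd ω = t := by
      constructor <;> intro h <;> simp [← h, mul_assoc]
    rw [List.map_cons, List.prod_cons, mul_smul, ih]
    refine Prod.ext (by simp [simpleAction, wordProd_cons, mul_assoc]) ?_
    simp [simpleAction, rightInvSeq, List.count_cons, conj_eq_iff, add_assoc]

lemma isLiftable_simpleAction : M.IsLiftable (simpleAction cs) := by
  intro i j
  have word_prod_eq_one : cs.wordProd (alternatingWord i j (M i j + M i j)) = 1 := by
    simp [prod_alternatingWord_eq_mul_pow, ← two_mul]
  refine funext fun ⟨t, e⟩ ↦ ?_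
  change (simpleAction cs i * simpleAction cs j) ^ M i j • (t, e) = (t, e)
  rw [← prod_map_alternatingWord_add_self, prod_simpleAction_smul, word_prod_eq_one,
    (even_count_rightInvSeq_alternatingWord cs i j t).natCast_zmod_two]
  simp

/-- The parity cocycle `n(w, t)`: the number, modulo 2, of occurrences of `t` in the right
inversion sequence of any word for `w`. -/
def parity (w t : W) : ZMod 2 :=
  (cs.lift ⟨simpleAction cs, isLiftable_simpleAction cs⟩ w • (t, (0 : ZMod 2))).2

lemma lift_simpleAction_wordProd (ω : List B) :
    cs.lift ⟨simpleAction cs, isLiftable_simpleAction cs⟩ (cs.wordProd ω) =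
      (ω.map (simpleAction cs)).prod := by
  simp [wordProd, map_list_prod, Function.comp_def]

lemma parity_wordProd (ω : List B) (t : W) :
    parity cs (cs.wordProd ω) t = (cs.rightInvSeq ω).count t := by
  rw [parity, lift_simpleAction_wordProd, prod_simpleAction_smul, zero_add]

lemma parity_one (t : W) : parity cs 1 t = 0 := by
  simpa using parity_wordProd cs [] t

lemma parity_simple_self (i : B) : parity cs (cs.simple i) (cs.simple i) = 1 := by
  simpa using parity_wordProd cs [i] (cs.simple i)

lemma parity_mul (w₁ w₂ t : W) :
    parity cs (w₁ * w₂) t = parity cs w₂ t + parity cs w₁ (w₂ * t * w₂⁻¹) := by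
  obtain ⟨ω₁, rfl⟩ := cs.wordProd_surjective w₁
  obtain ⟨ω₂, rfl⟩ := cs.wordProd_surjective w₂
  simp only [parity, map_mul, mul_smul, lift_simpleAction_wordProd, prod_simpleAction_smul,
    zero_add]

lemma parity_self_of_isReflection {t : W} (ht : cs.IsReflection t) : parity cs t t = 1 := by
  obtain ⟨w, i, rfl⟩ := ht
  have cancel := parity_mul cs w w⁻¹ (w * cs.simple i * w⁻¹)
  have expand := parity_mul cs (w * cs.simple i) w⁻¹ (w * cs.simple i * w⁻¹)
  have conj_eq : w⁻¹ * (w * cs.simple i * w⁻¹) * w⁻¹⁻¹ = cs.simple i := by simp [mul_assoc]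
  rw [conj_eq] at cancel expand
  rw [mul_inv_cancel, parity_one] at cancel
  rw [expand, parity_mul, parity_simple_self, mul_inv_cancel_right, add_left_comm, ← cancel,
    add_zero]

lemma mem_rightInvSeq_of_parity_ne_zero {ω : List B} {t : W}
    (h : parity cs (cs.wordProd ω) t ≠ 0) : t ∈ cs.rightInvSeq ω := by
  contrapose! h
  rw [parity_wordProd, List.count_eq_zero.2 h, Nat.cast_zero]

lemma parity_ne_zero_iff_isRightInversion {w t : W} :
    parity cs w t ≠ 0 ↔ cs.IsRightInversion w t := by
  have of_parity {w : W} (h : parity cs w t ≠ 0) : cs.IsRightInversion w t := by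
    obtain ⟨ω, hω, rfl⟩ := cs.exists_isReduced w
    exact cs.isRightInversion_of_mem_rightInvSeq hω (mem_rightInvSeq_of_parity_ne_zero cs h)
  refine ⟨of_parity, fun ⟨ht, hlt⟩ h ↦ ?_⟩
  have parity_mul_self : parity cs (w * t) t ≠ 0 := by
    simp [parity_mul, parity_self_of_isReflection cs ht, h]
  have hgt := (of_parity parity_mul_self).2
  rw [mul_assoc, ht.mul_self, mul_one] at hgt
  exact hgt.not_gt hlt

end Parity

lemma mem_rightInvSeq_of_isRightInversion {ω : List B} {t : W}
    (h : cs.IsRightInversion (cs.wordProd ω) t) : t ∈ cs.rightInvSeq ω := by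
  classical
  exact mem_rightInvSeq_of_parity_ne_zero cs ((parity_ne_zero_iff_isRightInversion cs).2 h)

lemma exists_isReduced_sublist (ω : List B) :
    ∃ ω' : List B, ω'.Sublist ω ∧ cs.IsReduced ω' ∧ cs.wordProd ω' = cs.wordProd ω := by
  induction ω using List.reverseRecOn with
  | nil => exact ⟨[], List.Sublist.refl _, by simp [CoxeterSystem.IsReduced], rfl⟩
  | append_singleton ω i ih =>
    obtain ⟨ω', hsub, hred, hprod⟩ := ih
    rw [wordProd_append, wordProd_singleton, ← hprod]
    by_cases hi : cs.IsRightDescent (cs.wordProd ω') i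
    · obtain ⟨j, hj, hji⟩ := List.getElem_of_mem (mem_rightInvSeq_of_isRightInversion cs
        ((cs.isRightInversion_simple_iff_isRightDescent _ i).2 hi))
      have herase : cs.wordProd (ω'.eraseIdx j) = cs.wordProd ω' * cs.simple i := by
        rw [← wordProd_mul_getD_rightInvSeq, List.getD_eq_getElem _ _ hj, hji]
      rw [length_rightInvSeq] at hj
      have hlen := (cs.isRightDescent_iff).1 hi
      rw [hred.eq, ← herase] at hlen
      refine ⟨ω'.eraseIdx j, (ω'.eraseIdx_sublist j).trans (hsub.trans
        (List.sublist_append_left ω [i])), ?_, herase⟩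
      rw [CoxeterSystem.IsReduced, List.length_eraseIdx_of_lt hj, ← hlen, Nat.add_sub_cancel]
    · refine ⟨ω' ++ [i], hsub.append_right [i], ?_, by simp [wordProd_append]⟩
      simp [CoxeterSystem.IsReduced, wordProd_append, (cs.not_isRightDescent_iff).1 hi, hred.eq]

lemma forall_rightInvSeq_mem_iff (H : Subgroup W) (ω : List B) :
    (∀ t ∈ cs.rightInvSeq ω, t ∈ H) ↔ ∀ i ∈ ω, cs.simple i ∈ H := by
  induction ω with
  | nil => simp
  | cons i ω ih =>
    rw [rightInvSeq, List.forall_mem_cons, List.forall_mem_cons, ih]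
    refine and_congr_left fun hω ↦ ?_
    have hprod : cs.wordProd ω ∈ H := H.list_prod_mem (by simpa using hω)
    rw [H.mul_mem_cancel_right hprod, H.mul_mem_cancel_left (H.inv_mem hprod)]

/-- The special subgroup `W_K` generated by the simple reflections indexed by `K`. -/
def specialSubgroup (K : Set B) : Subgroup W := Subgroup.closure (cs.simple '' K)

lemma simple_mem_specialSubgroup {K : Set B} {k : B} (hk : k ∈ K) :
    cs.simple k ∈ specialSubgroup cs K :=
  Subgroup.subset_closure ⟨k, hk, rfl⟩

lemma wordProd_mem_specialSubgroup {K : Set B} {ω : List B} (hω : ∀ k ∈ ω, k ∈ K) :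
    cs.wordProd ω ∈ specialSubgroup cs K :=
  Subgroup.list_prod_mem _ <| List.forall_mem_map.2 fun k hk ↦
    simple_mem_specialSubgroup cs (hω k hk)

lemma exists_wordProd_eq_of_mem_specialSubgroup {K : Set B} {v : W}
    (hv : v ∈ specialSubgroup cs K) : ∃ ω : List B, (∀ k ∈ ω, k ∈ K) ∧ cs.wordProd ω = v := by
  have mul_simple {x : W} {k : B} (hk : k ∈ K)
      (hx : ∃ ω : List B, (∀ k ∈ ω, k ∈ K) ∧ cs.wordProd ω = x) :
      ∃ ω : List B, (∀ k ∈ ω, k ∈ K) ∧ cs.wordProd ω = x * cs.simple k := by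
    obtain ⟨ω, hω, rfl⟩ := hx
    exact ⟨ω ++ [k], by simpa [or_imp, forall_and] using ⟨hω, hk⟩, by simp [wordProd_append]⟩
  induction hv using Subgroup.closure_induction_right with
  | one => exact ⟨[], by simp, by simp⟩
  | mul_right x _ y hy ih =>
    obtain ⟨k, hk, rfl⟩ := hy
    exact mul_simple hk ih
  | mul_inv_cancel x _ y hy ih =>
    obtain ⟨k, hk, rfl⟩ := hy
    simpa using mul_simple hk ih

lemma exists_isReduced_of_mem_specialSubgroup {K : Set B} {v : W}
    (hv : v ∈ specialSubgroup cs K) :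
    ∃ ω : List B, cs.IsReduced ω ∧ (∀ k ∈ ω, k ∈ K) ∧ cs.wordProd ω = v := by
  obtain ⟨ω, hω, rfl⟩ := exists_wordProd_eq_of_mem_specialSubgroup cs hv
  obtain ⟨ω', hsub, hred, hprod⟩ := exists_isReduced_sublist cs ω
  exact ⟨ω', hred, fun k hk ↦ hω k (hsub.subset hk), hprod⟩

lemma mem_specialSubgroup_of_isRightInversion {K : Set B} {v t : W}
    (hv : v ∈ specialSubgroup cs K) (h : cs.IsRightInversion v t) : t ∈ specialSubgroup cs K := by
  obtain ⟨ω, hω, rfl⟩ := exists_wordProd_eq_of_mem_specialSubgroup cs hv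
  exact (forall_rightInvSeq_mem_iff cs _ ω).2
    (fun k hk ↦ simple_mem_specialSubgroup cs (hω k hk)) t
    (mem_rightInvSeq_of_isRightInversion cs h)

/-- `d` is a representative of minimal length of the coset `d W_K`. -/
def IsMinimalCosetRep (K : Set B) (d : W) : Prop :=
  ∀ u ∈ specialSubgroup cs K, cs.length d ≤ cs.length (d * u)

lemma exists_isMinimalCosetRep_mul (K : Set B) (x : W) :
    ∃ u ∈ specialSubgroup cs K, IsMinimalCosetRep cs K (x * u) := by
  obtain ⟨u, hu, hmin⟩ := exists_minimalFor_of_wellFoundedLT (· ∈ specialSubgroup cs K)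
    (fun u ↦ cs.length (x * u)) ⟨1, one_mem _⟩
  refine ⟨u, hu, fun y hy ↦ le_of_not_gt fun hlt ↦ ?_⟩
  rw [mul_assoc] at hlt
  exact hlt.not_ge (hmin (mul_mem hu hy) hlt.le)

variable {cs}

lemma IsMinimalCosetRep.isRightInversion_conj {K : Set B} {d v t : W}
    (hd : IsMinimalCosetRep cs K d) (hv : v ∈ specialSubgroup cs K)
    (h : cs.IsRightInversion v t) : cs.IsRightInversion (d * v * d⁻¹) (d * t * d⁻¹) := by
  classical
  have parity_eq_zero {u : W} (hu : u ∈ specialSubgroup cs K) : parity cs d u = 0 := by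
    by_contra hne
    exact ((parity_ne_zero_iff_isRightInversion cs).1 hne).2.not_ge (hd u hu)
  have ht := mem_specialSubgroup_of_isRightInversion cs hv h
  rw [← parity_ne_zero_iff_isRightInversion] at h ⊢
  -- Expand `n(d v, t)` along both sides of `d v = (d v d⁻¹) d`.
  have parity_eq : parity cs (d * v * d⁻¹) (d * t * d⁻¹) = parity cs v t := by
    have hsplit := parity_mul cs (d * v * d⁻¹) d t
    rwa [inv_mul_cancel_right, parity_mul, parity_eq_zero ht,
      parity_eq_zero (mul_mem (mul_mem hv ht) (inv_mem hv)), add_zero, zero_add, eq_comm] at hsplit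
  rwa [parity_eq]

lemma IsMinimalCosetRep.specialSubgroup_inf_conj {K : Set B} {d : W}
    (hd : IsMinimalCosetRep cs K d) (J : Set B) :
    specialSubgroup cs K ⊓ MulAut.conj d⁻¹ • specialSubgroup cs J =
      specialSubgroup cs {k ∈ K | cs.simple k ∈ MulAut.conj d⁻¹ • specialSubgroup cs J} := by
  have mem_conj {v : W} : v ∈ MulAut.conj d⁻¹ • specialSubgroup cs J ↔
      d * v * d⁻¹ ∈ specialSubgroup cs J := by
    rw [map_inv, Subgroup.mem_inv_pointwise_smul_iff, MulAut.smul_def, MulAut.conj_apply]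
  apply le_antisymm
  · rintro v ⟨hvK, hvJ⟩
    obtain ⟨ω, hred, hω, rfl⟩ := exists_isReduced_of_mem_specialSubgroup cs hvK
    have inversions_mem : ∀ t ∈ cs.rightInvSeq ω,
        t ∈ MulAut.conj d⁻¹ • specialSubgroup cs J := fun t ht ↦
      mem_conj.2 <| mem_specialSubgroup_of_isRightInversion cs (mem_conj.1 hvJ) <|
        hd.isRightInversion_conj hvK <| cs.isRightInversion_of_mem_rightInvSeq hred ht
    have letters_mem := (forall_rightInvSeq_mem_iff cs _ ω).1 inversions_mem
    exact wordProd_mem_specialSubgroup cs fun k hk ↦ ⟨hω k hk, letters_mem k hk⟩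
  · rw [specialSubgroup, Subgroup.closure_le]
    rintro _ ⟨k, ⟨hkK, hkJ⟩, rfl⟩
    exact ⟨simple_mem_specialSubgroup cs hkK, hkJ⟩

variable (cs)

/-- The parabolic subgroup `x W_K x⁻¹`, as a translate of `W_K` under the pointwise action of
inner automorphisms on subgroups. -/
def parabolicSubgroup (x : W) (K : Set B) : Subgroup W := MulAut.conj x • specialSubgroup cs K

lemma parabolicSubgroup_univ (x : W) : parabolicSubgroup cs x Set.univ = ⊤ := by
  simp [parabolicSubgroup, specialSubgroup, cs.subgroup_closure_range_simple]

lemma parabolicSubgroup_mul_of_mem {J : Set B} {u : W} (x : W) (hu : u ∈ specialSubgroup cs J) :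
    parabolicSubgroup cs (x * u) J = parabolicSubgroup cs x J := by
  rw [parabolicSubgroup, map_mul, mul_smul, Subgroup.conj_smul_eq_self_of_mem hu, parabolicSubgroup]

lemma exists_parabolicSubgroup_inf_eq (x y : W) (J K : Set B) :
    ∃ z : W, ∃ J' ⊆ J, parabolicSubgroup cs z J = parabolicSubgroup cs x J ∧
      parabolicSubgroup cs x J ⊓ parabolicSubgroup cs y K = parabolicSubgroup cs z J' := by
  obtain ⟨u, hu, hd⟩ := exists_isMinimalCosetRep_mul cs J (y⁻¹ * x)
  have hxu := parabolicSubgroup_mul_of_mem cs x hu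
  refine ⟨x * u, {k ∈ J | cs.simple k ∈ MulAut.conj (y⁻¹ * x * u)⁻¹ • specialSubgroup cs K},
    Set.sep_subset _ _, hxu, ?_⟩
  have hy : y = x * u * (y⁻¹ * x * u)⁻¹ := by group
  calc parabolicSubgroup cs x J ⊓ parabolicSubgroup cs y K
      = MulAut.conj (x * u) • specialSubgroup cs J ⊓
          MulAut.conj (x * u * (y⁻¹ * x * u)⁻¹) • specialSubgroup cs K := by
        rw [← hy, ← hxu, parabolicSubgroup, parabolicSubgroup]
    _ = MulAut.conj (x * u) • (specialSubgroup cs J ⊓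
          MulAut.conj (y⁻¹ * x * u)⁻¹ • specialSubgroup cs K) := by
        rw [Subgroup.smul_inf, smul_smul, ← map_mul]
    _ = _ := by rw [hd.specialSubgroup_inf_conj, parabolicSubgroup]

end CoxeterParabolic

open CoxeterParabolic

theorem exists_minimal_parabolic_eq_inter_general
    {B W : Type*} [Group W] {M : CoxeterMatrix B} (cs : CoxeterSystem M W) (A : Set W)
    (hA : ∃ (x : W) (K : Set B), K.Finite ∧ A ⊆ parabolicSubgroup cs x K) :
    ∃ (w : W) (J : Set B),
      A ⊆ parabolicSubgroup cs w J ∧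
      (∀ (x : W) (K : Set B), A ⊆ parabolicSubgroup cs x K → J.encard ≤ K.encard) ∧
      parabolicSubgroup cs w J =
        sInf {G : Subgroup W | (∃ (x : W) (K : Set B), G = parabolicSubgroup cs x K) ∧
          A ⊆ (G : Set W)} := by
  obtain ⟨x₀, K₀, hK₀, hAK₀⟩ := hA
  obtain ⟨J, ⟨w, hAJ⟩, hminFor⟩ := exists_minimalFor_of_wellFoundedLT
    (fun K : Set B ↦ ∃ x, A ⊆ parabolicSubgroup cs x K) Set.encard ⟨K₀, x₀, hAK₀⟩
  have hmin (x : W) (K : Set B) (hAK : A ⊆ parabolicSubgroup cs x K) : J.encard ≤ K.encard :=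
    (le_total J.encard K.encard).elim id (hminFor ⟨x, hAK⟩)
  have hJ : J.Finite := hK₀.finite_of_encard_le (hmin x₀ K₀ hAK₀)
  refine ⟨w, J, hAJ, hmin, le_antisymm (le_sInf ?_) (sInf_le ⟨⟨w, J, rfl⟩, hAJ⟩)⟩
  rintro _ ⟨⟨x, K, rfl⟩, hAK⟩
  obtain ⟨z, J', hJ', hz, hinf⟩ := exists_parabolicSubgroup_inf_eq cs w x J K
  have hAJ' : A ⊆ parabolicSubgroup cs z J' := hinf ▸ Set.subset_inter hAJ hAK
  obtain rfl : J' = J := hJ.eq_of_subset_of_encard_le' hJ' (hmin z J' hAJ')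
  exact inf_eq_left.1 (hinf.trans hz)

/-- In a finite-rank Coxeter system, among all parabolic subgroups `w W_J w⁻¹`
containing a subset `A ⊆ W` there is one minimizing `|J|`, and this parabolic
subgroup equals the intersection of all parabolic subgroups containing `A`. -/
theorem exists_minimal_parabolic_eq_inter
    {B : Type*} [Finite B] {W : Type*} [Group W] {M : CoxeterMatrix B}
    (cs : CoxeterSystem M W) (A : Set W) :
    ∃ (w : W) (J : Set B),
      A ⊆ ((Subgroup.closure (cs.simple '' J)).map (MulAut.conj w).toMonoidHom : Set W) ∧
      (∀ (x : W) (K : Set B),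
        A ⊆ ((Subgroup.closure (cs.simple '' K)).map (MulAut.conj x).toMonoidHom : Set W) →
        J.ncard ≤ K.ncard) ∧
      (Subgroup.closure (cs.simple '' J)).map (MulAut.conj w).toMonoidHom =
        sInf {G : Subgroup W |
          (∃ (x : W) (K : Set B),
            G = (Subgroup.closure (cs.simple '' K)).map (MulAut.conj x).toMonoidHom) ∧
          A ⊆ (G : Set W)} := by
  obtain ⟨w, J, hAJ, hmin, heq⟩ := exists_minimal_parabolic_eq_inter_general cs A
    ⟨1, Set.univ, Set.toFinite _, by simp [parabolicSubgroup_univ]⟩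
  exact ⟨w, J, hAJ,
    fun x K hAK ↦ ENat.toNat_le_toNat (hmin x K hAK) K.toFinite.encard_lt_top.ne, heq⟩
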